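/- arXiv:1206.5078 — 2 statements merged into one kernel-verified Lean document; each statement's English description precedes it below -/
import Mathlib

section
/- Let I ⊆ ℝ be an open interval, let G, c > 0 and k ∈ ℝ be constants, let a : I → ℝ be twice differentiable with a(t) > 0 on I, let φ : I → ℝ be three times differentiable, let ρ : I → ℝ be differentiable, and let p : I → ℝ. Suppose that for all t ∈ I the following three equations hold: (i) a'' = −(4πG/3)(ρ + 3p/c²)·a + (1/6)·φ''·a − (1/2)·a'·φ'; (ii) φ''' + 3(a'/a)·φ'' = 8πG(ρ' + 3(a'/a)·ρ + 3(a'/a)·p/c²); (iii) (a')² = (8πG/3)·a²·ρ − (1/3)·φ''·a² − k c². Then (a'(t))²·φ'(t) = 0 for all t ∈ I; in particular, φ'(t) = 0 at every t with a'(t) ≠ 0. -/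
open Real

/-!
The scalar potential acts as a modification of the cosmic fluid. Put `ε = 8πGρ - φ''` and
`P = 8πGp/c²`. Then the constraint is the ordinary Friedmann equation
`(a')² = εa²/3 - kc²` and the conservation law is the ordinary continuity equation
`ε' + 3(a'/a)(ε + P) = 0`. As in general relativity, differentiating the first and inserting the
second gives `a'` times the acceleration equation `a'' = -(ε + 3P)a/6`. The field equation is this
acceleration equation with the extra friction term `-a'φ'/2`, so `a'` times that term vanishes.
-/

open scoped Topology

theorem mul_acceleration_of_friedmann_of_continuity {𝕜 : Type*} [NontriviallyNormedField 𝕜]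
    [CharZero 𝕜] {a a' ε : 𝕜 → 𝕜} {a'' ε' K P t : 𝕜}
    (ha : HasDerivAt a (a' t) t) (ha' : HasDerivAt a' a'' t) (hε : HasDerivAt ε ε' t)
    (friedmann_eq : ∀ᶠ s in 𝓝 t, a' s ^ 2 = ε s * a s ^ 2 / 3 - K)
    (continuity_eq : ε' * a t + 3 * a' t * (ε t + P) = 0) :
    a' t * a'' = a' t * (-(ε t + 3 * P) * a t / 6) := by
  have hasDerivAt_lhs : HasDerivAt (fun s ↦ a' s ^ 2) (2 * a' t * a'') t := by
    simpa using ha'.fun_pow 2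
  have hasDerivAt_rhs : HasDerivAt (fun s ↦ ε s * a s ^ 2 / 3 - K)
      ((ε' * a t ^ 2 + ε t * (2 * a t * a' t)) / 3) t := by
    simpa using ((hε.fun_mul (ha.fun_pow 2)).div_const 3).sub_const K
  have deriv_friedmann : 2 * a' t * a'' = (ε' * a t ^ 2 + ε t * (2 * a t * a' t)) / 3 :=
    hasDerivAt_lhs.unique (hasDerivAt_rhs.congr_of_eventuallyEq friedmann_eq)
  linear_combination deriv_friedmann / 2 + a t / 6 * continuity_eq

/-- Here `κ` is `8πG`, `K` is `kc²`, and `p` is the pressure divided by `c²`. -/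
theorem flrw_scalar_potential_constant_general {𝕜 : Type*} [NontriviallyNormedField 𝕜] [CharZero 𝕜]
    {I : Set 𝕜} (hI : IsOpen I) {κ K : 𝕜} {a a' a'' φ φ' φ'' φ''' ρ ρ' p : 𝕜 → 𝕜}
    (ha : ∀ t ∈ I, HasDerivAt a (a' t) t)
    (ha' : ∀ t ∈ I, HasDerivAt a' (a'' t) t)
    (hφ : ∀ t ∈ I, HasDerivAt φ (φ' t) t)
    (hφ' : ∀ t ∈ I, HasDerivAt φ' (φ'' t) t)
    (hφ'' : ∀ t ∈ I, HasDerivAt φ'' (φ''' t) t)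
    (hρ : ∀ t ∈ I, HasDerivAt ρ (ρ' t) t)
    (a_ne_zero : ∀ t ∈ I, a t ≠ 0)
    (field_eq : ∀ t ∈ I, a'' t
      = -(κ / 6) * (ρ t + 3 * p t) * a t + φ'' t * a t / 6 - a' t * φ' t / 2)
    (conservation : ∀ t ∈ I, φ''' t + 3 * (a' t / a t) * φ'' t
      = κ * (ρ' t + 3 * (a' t / a t) * (ρ t + p t)))
    (constraint : ∀ t ∈ I, a' t ^ 2 = κ / 3 * a t ^ 2 * ρ t - φ'' t * a t ^ 2 / 3 - K) :
    ∀ t ∈ I, a' t ^ 2 * φ' t = 0 := by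
  intro t ht
  have hasDerivAt_density : HasDerivAt (fun s ↦ κ * ρ s - φ'' s) (κ * ρ' t - φ''' t) t :=
    ((hρ t ht).const_mul κ).sub (hφ'' t ht)
  have friedmann_eq : ∀ᶠ s in 𝓝 t, a' s ^ 2 = (κ * ρ s - φ'' s) * a s ^ 2 / 3 - K := by
    filter_upwards [hI.mem_nhds ht] with s hs
    linear_combination constraint s hs
  have continuity_eq : (κ * ρ' t - φ''' t) * a t
      + 3 * a' t * (κ * ρ t - φ'' t + κ * p t) = 0 := by
    have hubble_mul : a' t / a t * a t = a' t := div_mul_cancel₀ _ (a_ne_zero t ht)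
    linear_combination -a t * conservation t ht
      - 3 * (κ * ρ t - φ'' t + κ * p t) * hubble_mul
  have acceleration := mul_acceleration_of_friedmann_of_continuity
    (ha t ht) (ha' t ht) hasDerivAt_density friedmann_eq continuity_eq
  linear_combination 2 * a' t * field_eq t ht - 2 * acceleration

/-- For a homogeneous isotropic (FLRW) universe, the reduced field equation (7.6),
the conservation law (7.8) and the constraint (7.9) of the new gravitational field
equations imply `(a')²·φ' = 0`, i.e. the scalar potential `φ` is constant wherever
`a' ≠ 0` (equation (7.10) of the paper). -/
theorem flrw_scalar_potential_constant
    (I : Set ℝ) (hIopen : IsOpen I) (hIconn : IsPreconnected I)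
    (G c k : ℝ) (hG : 0 < G) (hc : 0 < c)
    (a a' a'' φ φ' φ'' φ''' ρ ρ' p : ℝ → ℝ)
    (ha : ∀ t ∈ I, HasDerivAt a (a' t) t)
    (ha' : ∀ t ∈ I, HasDerivAt a' (a'' t) t)
    (hφ : ∀ t ∈ I, HasDerivAt φ (φ' t) t)
    (hφ' : ∀ t ∈ I, HasDerivAt φ' (φ'' t) t)
    (hφ'' : ∀ t ∈ I, HasDerivAt φ'' (φ''' t) t)
    (hρ : ∀ t ∈ I, HasDerivAt ρ (ρ' t) t)
    (hapos : ∀ t ∈ I, 0 < a t)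
    (heq1 : ∀ t ∈ I, a'' t = -(4 * π * G / 3) * (ρ t + 3 * p t / c ^ 2) * a t
        + (1 / 6) * φ'' t * a t - (1 / 2) * a' t * φ' t)
    (heq2 : ∀ t ∈ I, φ''' t + 3 * (a' t / a t) * φ'' t
        = 8 * π * G * (ρ' t + 3 * (a' t / a t) * ρ t + 3 * (a' t / a t) * p t / c ^ 2))
    (heq3 : ∀ t ∈ I, (a' t) ^ 2
        = (8 * π * G / 3) * (a t) ^ 2 * ρ t - (1 / 3) * φ'' t * (a t) ^ 2 - k * c ^ 2) :
    ∀ t ∈ I, (a' t) ^ 2 * φ' t = 0 := by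
  exact flrw_scalar_potential_constant_general (κ := 8 * π * G) (K := k * c ^ 2)
    (p := fun t ↦ p t / c ^ 2) hIopen ha ha' hφ hφ' hφ'' hρ (fun t ht ↦ (hapos t ht).ne')
    (fun t ht ↦ by linear_combination heq1 t ht)
    (fun t ht ↦ by linear_combination heq2 t ht)
    (fun t ht ↦ by linear_combination heq3 t ht)
end

section
/- Let J ⊆ (0, ∞) be an open interval, let m, c > 0, and let u, v, φ : J → ℝ be twice differentiable functions satisfying the three equations (E1): u'' + 2u'/r + (u'/2)(u'−v') = φ'' − (1/2)(u' + v' − 4/r)·φ', (E2): u'' − 2v'/r + (u'/2)(u'−v') = −φ'' + (1/2)(u' + v' + 4/r)·φ', and (E3): u' − v' + (2/r)(1 − e^{v}) = r·(φ'' + (1/2)(u'−v')·φ'). Define the gravitational potential ψ = (c²/2)(e^{u} − 1) and the interaction force F = −m·ψ'. Then at every r ∈ J with 1 + (r/2)φ'(r) ≠ 0 and 1 − (r/2)φ'(r) ≠ 0 one has F = (m c²/2)·e^{u}·[ −(1/(1 − (r/2)φ'))·(1/r)(e^{v} − 1) − r·φ'' / (1 − ((r/2)φ')²) ]. -/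
open Real

/-!
In the difference of the first two field equations `u''` cancels and only the sum `u' + v'` remains,
giving `(1 + (r/2)φ') (u' + v') = rφ''`; collecting `u' - v'` in the third gives
`(1 - (r/2)φ') (u' - v') = rφ'' + (2/r) (eᵛ - 1)`. Where both coefficients are nonzero, this
determines `u'`, and the force is `-(mc²/2) eᵘ u'`.
-/

section MetricDerivatives

variable {K : Type*} [Field K]

theorem eq_div_add_div_of_mul_add_of_mul_sub [NeZero (2 : K)] {t a b x s : K}
    (hadd : (1 + t) * (a + b) = x) (hsub : (1 - t) * (a - b) = x + 2 * s)
    (hpos : 1 + t ≠ 0) (hneg : 1 - t ≠ 0) :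
    a = s / (1 - t) + x / (1 - t ^ 2) := by
  have eliminate_b : a * ((1 + t) * (1 - t)) = (1 + t) * s + x := by
    apply mul_left_cancel₀ (two_ne_zero (α := K))
    linear_combination (1 - t) * hadd + (1 + t) * hsub
  calc
    a = ((1 + t) * s + x) / ((1 + t) * (1 - t)) :=
      eq_div_of_mul_eq (mul_ne_zero hpos hneg) eliminate_b
    _ = s / (1 - t) + x / ((1 + t) * (1 - t)) := by
      rw [add_div, mul_div_mul_left _ _ hpos]
    _ = s / (1 - t) + x / (1 - t ^ 2) := by ring

variable {r u' u'' v' φ' φ'' : K}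

theorem one_add_mul_metric_deriv_add [NeZero (2 : K)] (hr : r ≠ 0)
    (hE1 : u'' + 2 * u' / r + (u' / 2) * (u' - v')
      = φ'' - (1 / 2) * (u' + v' - 4 / r) * φ')
    (hE2 : u'' - 2 * v' / r + (u' / 2) * (u' - v')
      = -φ'' + (1 / 2) * (u' + v' + 4 / r) * φ') :
    (1 + (r / 2) * φ') * (u' + v') = r * φ'' := by
  have h_two : (2 : K) ≠ 0 := two_ne_zero
  have difference : 2 * ((u' + v') / r) = 2 * (φ'' - (u' + v') / 2 * φ') := by
    linear_combination hE1 - hE2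
  have h_sum : u' + v' = (φ'' - (u' + v') / 2 * φ') * r :=
    (div_eq_iff hr).mp (mul_left_cancel₀ h_two difference)
  linear_combination h_sum

theorem one_sub_mul_metric_deriv_sub {w : K}
    (hE3 : u' - v' + (2 / r) * (1 - w) = r * (φ'' + (1 / 2) * (u' - v') * φ')) :
    (1 - (r / 2) * φ') * (u' - v') = r * φ'' + 2 * ((1 / r) * (w - 1)) := by
  linear_combination hE3

end MetricDerivatives

theorem hasDerivAt_gravitational_potential {u : ℝ → ℝ} {u' r : ℝ} (c : ℝ)
    (hu : HasDerivAt u u' r) :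
    HasDerivAt (fun s => (c ^ 2 / 2) * (Real.exp (u s) - 1))
      ((c ^ 2 / 2) * (Real.exp (u r) * u')) r :=
  (hu.exp.sub_const 1).const_mul (c ^ 2 / 2)

theorem central_field_force_formula_general
    {u u' v φ φ' : ℝ → ℝ} {r u'' v' φ'' : ℝ} (hr : r ≠ 0) (m c : ℝ)
    (hu : ∀ᶠ s in nhds r, HasDerivAt u (u' s) s) (hu' : HasDerivAt u' u'' r)
    (hv : HasDerivAt v v' r)
    (hφ : ∀ᶠ s in nhds r, HasDerivAt φ (φ' s) s) (hφ' : HasDerivAt φ' φ'' r)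
    (hE1 : u'' + 2 * u' r / r + (u' r / 2) * (u' r - v')
      = φ'' - (1 / 2) * (u' r + v' - 4 / r) * φ' r)
    (hE2 : u'' - 2 * v' / r + (u' r / 2) * (u' r - v')
      = -φ'' + (1 / 2) * (u' r + v' + 4 / r) * φ' r)
    (hE3 : u' r - v' + (2 / r) * (1 - Real.exp (v r))
      = r * (φ'' + (1 / 2) * (u' r - v') * φ' r))
    (hpos : 1 + (r / 2) * φ' r ≠ 0) (hneg : 1 - (r / 2) * φ' r ≠ 0) :
    -m * deriv (fun s => (c ^ 2 / 2) * (Real.exp (u s) - 1)) r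
      = (m * c ^ 2 / 2) * Real.exp (u r) *
        (-(1 / (1 - (r / 2) * φ' r)) * (1 / r) * (Real.exp (v r) - 1)
          - r * φ'' / (1 - ((r / 2) * φ' r) ^ 2)) := by
  have u'_eq : u' r = (1 / r) * (Real.exp (v r) - 1) / (1 - (r / 2) * φ' r)
      + r * φ'' / (1 - ((r / 2) * φ' r) ^ 2) :=
    eq_div_add_div_of_mul_add_of_mul_sub (one_add_mul_metric_deriv_add hr hE1 hE2)
      (one_sub_mul_metric_deriv_sub hE3) hpos hneg
  rw [(hasDerivAt_gravitational_potential c hu.self_of_nhds).deriv, u'_eq]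
  ring

/-- Interaction force formula (6.10a): for the new gravitational field equations
(5.14)–(5.16) in a static spherically symmetric central field, the force
`F = −mψ'` on an object of mass `m`, where `ψ = (c²/2)(eᵘ − 1)` is the gravitational
potential, satisfies
`F = (mc²/2)eᵘ[ −(1/(1 − (r/2)φ'))·(1/r)(eᵛ − 1) − rφ''/(1 − ((r/2)φ')²) ]`. -/
theorem central_field_force_formula
    (J : Set ℝ) (hJopen : IsOpen J) (hJconn : IsPreconnected J) (hJ : J ⊆ Set.Ioi 0)
    (m c : ℝ) (hm : 0 < m) (hc : 0 < c)
    (u u' u'' v v' v'' φ φ' φ'' : ℝ → ℝ)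
    (hu : ∀ r ∈ J, HasDerivAt u (u' r) r)
    (hu' : ∀ r ∈ J, HasDerivAt u' (u'' r) r)
    (hv : ∀ r ∈ J, HasDerivAt v (v' r) r)
    (hv' : ∀ r ∈ J, HasDerivAt v' (v'' r) r)
    (hφ : ∀ r ∈ J, HasDerivAt φ (φ' r) r)
    (hφ' : ∀ r ∈ J, HasDerivAt φ' (φ'' r) r)
    (hE1 : ∀ r ∈ J, u'' r + 2 * u' r / r + (u' r / 2) * (u' r - v' r)
        = φ'' r - (1 / 2) * (u' r + v' r - 4 / r) * φ' r)
    (hE2 : ∀ r ∈ J, u'' r - 2 * v' r / r + (u' r / 2) * (u' r - v' r)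
        = -φ'' r + (1 / 2) * (u' r + v' r + 4 / r) * φ' r)
    (hE3 : ∀ r ∈ J, u' r - v' r + (2 / r) * (1 - Real.exp (v r))
        = r * (φ'' r + (1 / 2) * (u' r - v' r) * φ' r)) :
    ∀ r ∈ J, 1 + (r / 2) * φ' r ≠ 0 → 1 - (r / 2) * φ' r ≠ 0 →
      -m * deriv (fun s => (c ^ 2 / 2) * (Real.exp (u s) - 1)) r
        = (m * c ^ 2 / 2) * Real.exp (u r) *
          (-(1 / (1 - (r / 2) * φ' r)) * (1 / r) * (Real.exp (v r) - 1)
            - r * φ'' r / (1 - ((r / 2) * φ' r) ^ 2)) := by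
  intro r hr hpos hneg
  have hJ_nhds : J ∈ nhds r := hJopen.mem_nhds hr
  exact central_field_force_formula_general (hJ hr).ne' m c
    (Filter.mem_of_superset hJ_nhds hu) (hu' r hr) (hv r hr)
    (Filter.mem_of_superset hJ_nhds hφ) (hφ' r hr)
    (hE1 r hr) (hE2 r hr) (hE3 r hr) hpos hneg
end
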